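/- arXiv:1803.08522 — 2 statements merged into one kernel-verified Lean document; each statement's English description precedes it below -/
import Mathlib

section
/- Let K ⊆ ℝⁿ be a closed set and let q : ℝⁿ → (0, ∞) be a measurable, strictly positive function. Then the ghost density is strictly positive on Kᶜ × Kᶜ: for all x, y ∈ Kᶜ, q_K(x, y) > 0. -/
open MeasureTheory

noncomputable def ell {n : ℕ} (K : Set (EuclideanSpace ℝ (Fin n)))
    (x φ : EuclideanSpace ℝ (Fin n)) (r : ℝ) : ℝ :=
  ∫ t in (0:ℝ)..r, Set.indicator Kᶜ (fun _ => (1:ℝ)) (x + t • φ)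

open Classical in
noncomputable def ghost {n : ℕ} (K : Set (EuclideanSpace ℝ (Fin n)))
    (q : EuclideanSpace ℝ (Fin n) → ℝ)
    (x y : EuclideanSpace ℝ (Fin n)) : ℝ :=
  if y = x then q 0
  else
    q ((ell K x (‖y - x‖⁻¹ • (y - x)) ‖y - x‖) • (‖y - x‖⁻¹ • (y - x)))
      * (ell K x (‖y - x‖⁻¹ • (y - x)) ‖y - x‖ / ‖y - x‖) ^ (n - 1)
      * Set.indicator Kᶜ (fun _ => (1:ℝ)) y

theorem ell_pos_aux {n : ℕ} (K : Set (EuclideanSpace ℝ (Fin n))) (hK : IsClosed K)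
    (x φ : EuclideanSpace ℝ (Fin n)) (r : ℝ) (hr : 0 < r) (hx : x ∈ Kᶜ) :
    0 < ell K x φ r := by
  unfold ell
  have hcont : Continuous (fun t : ℝ => x + t • φ) := by fun_prop
  have hopen : IsOpen ((fun t : ℝ => x + t • φ) ⁻¹' Kᶜ) := hK.isOpen_compl.preimage hcont
  have hmeas : Measurable (fun t : ℝ => Set.indicator Kᶜ (fun _ => (1:ℝ)) (x + t • φ)) :=
    (measurable_const.indicator hK.isOpen_compl.measurableSet).comp hcont.measurable
  have hnn : ∀ t : ℝ, 0 ≤ Set.indicator Kᶜ (fun _ => (1:ℝ)) (x + t • φ) :=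
    fun t => Set.indicator_nonneg (fun _ _ => zero_le_one) _
  have hint : IntervalIntegrable
      (fun t : ℝ => Set.indicator Kᶜ (fun _ => (1:ℝ)) (x + t • φ)) volume 0 r := by
    refine (intervalIntegrable_const (c := (1:ℝ))).mono_fun hmeas.aestronglyMeasurable ?_
    refine Filter.Eventually.of_forall fun t => ?_
    by_cases h : x + t • φ ∈ Kᶜ
    · simp only [Set.indicator_of_mem h, le_refl]
    · simp only [Set.indicator_of_notMem h]; simp
  rw [intervalIntegral.integral_pos_iff_support_of_nonneg_ae
    (Filter.Eventually.of_forall hnn) hint]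
  refine ⟨hr, ?_⟩
  have h0 : (0:ℝ) ∈ (fun t : ℝ => x + t • φ) ⁻¹' Kᶜ := by
    simpa using hx
  obtain ⟨ε, hε, hb⟩ := Metric.isOpen_iff.1 hopen 0 h0
  have hsub : Set.Ioo 0 (min ε r) ⊆ Function.support
      (fun t : ℝ => Set.indicator Kᶜ (fun _ => (1:ℝ)) (x + t • φ)) ∩ Set.Ioc 0 r := by
    intro t ht
    have h1 := lt_min_iff.1 ht.2
    have hm : x + t • φ ∈ Kᶜ := hb (by
      rw [Metric.mem_ball, Real.dist_eq, sub_zero, abs_of_pos ht.1]; exact h1.1)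
    refine ⟨?_, ht.1, h1.2.le⟩
    rw [Function.mem_support, Set.indicator_of_mem hm]
    exact one_ne_zero
  refine lt_of_lt_of_le ?_ (measure_mono hsub)
  rw [Real.volume_Ioo, ENNReal.ofReal_pos, sub_zero]
  exact lt_min hε hr

theorem ghost_pos {n : ℕ} (K : Set (EuclideanSpace ℝ (Fin n))) (hK : IsClosed K)
    (q : EuclideanSpace ℝ (Fin n) → ℝ) (hqm : Measurable q)
    (hqpos : ∀ z, 0 < q z)
    (x y : EuclideanSpace ℝ (Fin n)) (hx : x ∈ Kᶜ) (hy : y ∈ Kᶜ) :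
    0 < ghost K q x y := by
  unfold ghost
  split_ifs with h
  · exact hqpos 0
  · have hr : 0 < ‖y - x‖ := norm_pos_iff.2 (sub_ne_zero.2 h)
    rw [Set.indicator_of_mem hy, mul_one]
    exact mul_pos (hqpos _) (pow_pos (div_pos (ell_pos_aux K hK x _ _ hr hx) hr) _)
end

section
/- Let K ⊆ ℝⁿ be a closed set, let x ∈ Kᶜ and let q : ℝⁿ → (0, ∞) be a measurable, strictly positive function. If A ⊆ ℝⁿ is a measurable set such that A ∩ Kᶜ has positive Lebesgue measure, then Q_K(x, A) > 0. -/
open MeasureTheory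

lemma ell_pos {n : ℕ} (K : Set (EuclideanSpace ℝ (Fin n)))
    (hK : IsClosed K) (x : EuclideanSpace ℝ (Fin n)) (hx : x ∈ Kᶜ)
    (φ : EuclideanSpace ℝ (Fin n)) (r : ℝ) (hr : 0 < r) : 0 < ell K x φ r := by
  have hc : Continuous (fun t : ℝ => x + t • φ) := by fun_prop
  have hopen : IsOpen ((fun t : ℝ => x + t • φ) ⁻¹' Kᶜ) := hK.isOpen_compl.preimage hc
  have hm : Measurable (fun t : ℝ => Set.indicator Kᶜ (fun _ => (1:ℝ)) (x + t • φ)) :=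
    (measurable_const.indicator hK.measurableSet.compl).comp hc.measurable
  have h0 : (0:ℝ) ∈ (fun t : ℝ => x + t • φ) ⁻¹' Kᶜ := by simpa using hx
  obtain ⟨δ, hδ, hball⟩ := Metric.isOpen_iff.1 hopen 0 h0
  unfold ell
  rw [intervalIntegral.integral_pos_iff_support_of_nonneg_ae]
  · refine ⟨hr, ?_⟩
    refine lt_of_lt_of_le (b := volume (Set.Ioo 0 (min δ r))) ?_ (measure_mono ?_)
    · simp [hδ, hr]
    · intro t ht
      have h1 := lt_min_iff.1 ht.2
      have : x + t • φ ∈ Kᶜ := hball (by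
        simp [abs_of_pos ht.1, h1.1])
      refine ⟨?_, ht.1, h1.2.le⟩
      rw [Function.mem_support, Set.indicator_of_mem this]
      exact one_ne_zero
  · exact Filter.Eventually.of_forall fun t => Set.indicator_nonneg (fun _ _ => zero_le_one) _
  · refine (intervalIntegrable_const (c := (1:ℝ))).mono_fun hm.aestronglyMeasurable ?_
    refine Filter.Eventually.of_forall fun t => ?_
    exact norm_indicator_le_norm_self (fun _ => (1:ℝ)) _

lemma ell_meas {n : ℕ} (K : Set (EuclideanSpace ℝ (Fin n)))
    (hK : IsClosed K) (x : EuclideanSpace ℝ (Fin n)) :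
    Measurable fun y => ell K x (‖y - x‖⁻¹ • (y - x)) ‖y - x‖ := by
  have h : (fun y => ell K x (‖y - x‖⁻¹ • (y - x)) ‖y - x‖) = fun y =>
      ∫ t : ℝ, Set.indicator {p : EuclideanSpace ℝ (Fin n) × ℝ | 0 < p.2 ∧ p.2 ≤ ‖p.1 - x‖}
        (fun p => Set.indicator Kᶜ (fun _ => (1:ℝ))
          (x + p.2 • (‖p.1 - x‖⁻¹ • (p.1 - x)))) (y, t) := by
    funext y
    unfold ell
    rw [intervalIntegral.integral_of_le (norm_nonneg _), ← integral_indicator measurableSet_Ioc]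
    rfl
  rw [h]
  refine StronglyMeasurable.measurable (StronglyMeasurable.integral_prod_right ?_)
  refine Measurable.stronglyMeasurable (Measurable.indicator ?_ ?_)
  · exact (measurable_const.indicator hK.measurableSet.compl).comp (by fun_prop)
  · have h1 : MeasurableSet {p : EuclideanSpace ℝ (Fin n) × ℝ | 0 < p.2} :=
      measurableSet_lt measurable_const measurable_snd
    have h2 : MeasurableSet {p : EuclideanSpace ℝ (Fin n) × ℝ | p.2 ≤ ‖p.1 - x‖} :=
      measurableSet_le (by fun_prop) (by fun_prop)
    exact h1.inter h2

theorem ghost_kernel_pos {n : ℕ} (K : Set (EuclideanSpace ℝ (Fin n)))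
    (hK : IsClosed K) (x : EuclideanSpace ℝ (Fin n)) (hx : x ∈ Kᶜ)
    (q : EuclideanSpace ℝ (Fin n) → ℝ) (hqm : Measurable q) (hqpos : ∀ z, 0 < q z)
    (A : Set (EuclideanSpace ℝ (Fin n))) (hA : MeasurableSet A)
    (hAK : 0 < volume (A ∩ Kᶜ)) :
    0 < ∫⁻ y in A, ENNReal.ofReal (ghost K q x y) ∂volume := by
  have hl := ell_meas K hK x
  have hm : Measurable (ghost K q x) := by
    unfold ghost
    refine Measurable.ite (measurableSet_eq) measurable_const ?_
    refine Measurable.mul (Measurable.mul (hqm.comp ?_) ?_)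
      (measurable_const.indicator hK.measurableSet.compl)
    · exact hl.smul (by fun_prop)
    · exact (hl.div (by fun_prop)).pow_const _
  rw [setLIntegral_pos_iff hm.ennreal_ofReal]
  refine hAK.trans_le (measure_mono ?_)
  rintro y ⟨hyA, hyK⟩
  refine ⟨?_, hyA⟩
  rw [Function.mem_support]
  refine (ENNReal.ofReal_pos.2 ?_).ne'
  unfold ghost
  split_ifs with h
  · exact hqpos _
  · have hr : 0 < ‖y - x‖ := norm_pos_iff.2 (sub_ne_zero.2 h)
    rw [Set.indicator_of_mem hyK, mul_one]
    exact mul_pos (hqpos _) (pow_pos (div_pos (ell_pos K hK x hx _ _ hr) hr) _)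
end
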